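/- The K-subalgebra S^δ = ker δ_S equals the K-subalgebra of S generated by the set {u_{2i−1} : 1 ≤ i ≤ d} ∪ {v_{2i−1} : 1 ≤ i ≤ d} ∪ {α_{pq} : 1 ≤ p < q ≤ d} ∪ {β_{pq} : 1 ≤ p < q ≤ d} ∪ {γ_{pq} : 1 ≤ p, q ≤ d}. -/

import Mathlib

open MvPolynomial

namespace Stmt1

/-- The polynomial ring `S = K[u_1, …, u_{2d}, v_1, …, v_{2d}]`, where the variable
`X (Sum.inl (i, 0))` is `u_{2i-1}`, `X (Sum.inl (i, 1))` is `u_{2i}`,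
`X (Sum.inr (i, 0))` is `v_{2i-1}` and `X (Sum.inr (i, 1))` is `v_{2i}`. -/
abbrev S (K : Type*) [Field K] (d : ℕ) : Type _ :=
  MvPolynomial ((Fin d × Fin 2) ⊕ (Fin d × Fin 2)) K

variable (K : Type*) [Field K] (d : ℕ)

noncomputable def u (j : Fin d × Fin 2) : S K d := X (Sum.inl j)

noncomputable def v (j : Fin d × Fin 2) : S K d := X (Sum.inr j)

/-- `α_{pq} = u_{2p-1} u_{2q} - u_{2p} u_{2q-1}`. -/
noncomputable def α (p q : Fin d) : S K d :=
  u K d (p, 0) * u K d (q, 1) - u K d (p, 1) * u K d (q, 0)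

/-- `β_{pq} = v_{2p-1} v_{2q} - v_{2p} v_{2q-1}`. -/
noncomputable def β (p q : Fin d) : S K d :=
  v K d (p, 0) * v K d (q, 1) - v K d (p, 1) * v K d (q, 0)

/-- `γ_{pq} = u_{2p-1} v_{2q} - u_{2p} v_{2q-1}`. -/
noncomputable def γ (p q : Fin d) : S K d :=
  u K d (p, 0) * v K d (q, 1) - u K d (p, 1) * v K d (q, 0)

section Gen

variable {F : Type*} [Field F] {I σ : Type*} [Fintype I] [Fintype σ]

theorem pderiv_comm' (i j : σ) (f : MvPolynomial σ F) :
    pderiv i (pderiv j f) = pderiv j (pderiv i f) := by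
  classical
  have h : ⁅(pderiv i : Derivation F (MvPolynomial σ F) (MvPolynomial σ F)),
      (pderiv j : Derivation F (MvPolynomial σ F) (MvPolynomial σ F))⁆ = 0 := by
    apply MvPolynomial.derivation_ext
    intro k
    simp only [Derivation.commutator_apply, pderiv_X, Derivation.zero_apply]
    simp only [Pi.single_apply]
    split_ifs <;> simp
  have h2 := congrArg (fun D => D f) h
  simp only [Derivation.commutator_apply, Derivation.zero_apply] at h2
  exact sub_eq_zero.mp h2

theorem comp_comm (w : σ → ℕ) (k : ℕ) (D : Derivation F (MvPolynomial σ F) (MvPolynomial σ F))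
    (hD : ∀ n f, IsWeightedHomogeneous w f n → IsWeightedHomogeneous w (D f) (n + k))
    (n : ℕ) (f : MvPolynomial σ F) :
    weightedHomogeneousComponent w (n + k) (D f) = D (weightedHomogeneousComponent w n f) := by
  induction f using MvPolynomial.induction_on' with
  | monomial s r =>
    have h := isWeightedHomogeneous_monomial w s r rfl
    have h2 := hD _ _ h
    rw [weightedHomogeneousComponent_of_mem h, weightedHomogeneousComponent_of_mem h2]
    by_cases hn : n = Finsupp.weight w s
    · simp [hn]
    · simp [hn]
  | add p q hp hq => simp [hp, hq]

theorem der_sum (D : I → Derivation F (MvPolynomial σ F) (MvPolynomial σ F))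
    (f : MvPolynomial σ F) : (∑ j, D j) f = ∑ j, D j f := by
  have h := map_sum (Derivation.coeFnAddMonoidHom (R := F) (A := MvPolynomial σ F)
    (M := MvPolynomial σ F)) D Finset.univ
  have h2 := congrFun h f
  rw [Finset.sum_apply] at h2
  exact h2

theorem gen (e : I ⊕ I ≃ σ) [CharZero F]
    (D : Derivation F (MvPolynomial σ F) (MvPolynomial σ F))
    (hx : ∀ i, D (X (e (Sum.inl i))) = 0)
    (hy : ∀ i, D (X (e (Sum.inr i))) = X (e (Sum.inl i)))
    (A : Subalgebra F (MvPolynomial σ F))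
    (hA : ∀ i, X (e (Sum.inl i)) ∈ A)
    (hB : ∀ i j, X (e (Sum.inl i)) * X (e (Sum.inr j)) - X (e (Sum.inr i)) * X (e (Sum.inl j)) ∈ A)
    (f : MvPolynomial σ F) (hf : D f = 0) : f ∈ A := by
  classical
  have hDf : ∀ f, D f = ∑ j, X (e (Sum.inl j)) * pderiv (e (Sum.inr j)) f := by
    intro f
    have : D = ∑ j, (X (e (Sum.inl j)) : MvPolynomial σ F) •
        (pderiv (e (Sum.inr j)) : Derivation F (MvPolynomial σ F) (MvPolynomial σ F)) := by
      apply MvPolynomial.derivation_ext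
      intro k
      obtain ⟨k, rfl⟩ := e.surjective k
      rw [der_sum]
      rcases k with k | k
      · rw [hx, Finset.sum_eq_zero]
        intro j _
        simp [pderiv_X, Pi.single_apply]
      · rw [hy, Finset.sum_eq_single k]
        · simp
        · intro j _ hj
          simp [pderiv_X, Pi.single_apply, hj.symm]
        · simp
    conv_lhs => rw [this]
    rw [der_sum]
    simp
  -- derivatives and D
  have hDy : ∀ i f, D f = 0 → D (pderiv (e (Sum.inr i)) f) = 0 := by
    intro i f hf
    have h := congrArg (pderiv (e (Sum.inr i))) (hDf f)
    rw [hf, map_zero, map_sum] at h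
    rw [hDf, h]
    refine Finset.sum_congr rfl fun j _ => ?_
    rw [pderiv_mul, pderiv_X_of_ne (by simp), pderiv_comm']
    ring
  have hDx' : ∀ i f, pderiv (e (Sum.inl i)) (D f) =
      pderiv (e (Sum.inr i)) f + D (pderiv (e (Sum.inl i)) f) := by
    intro i f
    rw [hDf, hDf, map_sum]
    have : ∀ j, pderiv (e (Sum.inl i)) (X (e (Sum.inl j)) * pderiv (e (Sum.inr j)) f) =
        (if j = i then pderiv (e (Sum.inr j)) f else 0) +
          X (e (Sum.inl j)) * pderiv (e (Sum.inr j)) (pderiv (e (Sum.inl i)) f) := by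
      intro j
      rw [pderiv_mul, pderiv_comm' (e (Sum.inl i)), pderiv_X, Pi.single_apply]
      by_cases h : j = i <;> simp [h]
    simp_rw [this]
    rw [Finset.sum_add_distrib]
    simp
  have hDx : ∀ i f, D f = 0 → D (pderiv (e (Sum.inl i)) f) = - pderiv (e (Sum.inr i)) f := by
    intro i f hf
    have := hDx' i f
    rw [hf, map_zero] at this
    exact (neg_eq_of_add_eq_zero_right this.symm).symm
  have hOm : ∀ i j f, D f = 0 → D (pderiv (e (Sum.inl i)) (pderiv (e (Sum.inr j)) f)
      - pderiv (e (Sum.inl j)) (pderiv (e (Sum.inr i)) f)) = 0 := by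
    intro i j f hf
    rw [map_sub, hDx _ _ (hDy _ _ hf), hDx _ _ (hDy _ _ hf), pderiv_comm' (e (Sum.inr i))]
    ring
  -- weights
  let w : σ → ℕ := fun s => Sum.elim (fun _ => 1) (fun _ => 0) (e.symm s)
  have hwD : ∀ n f, IsWeightedHomogeneous w f n → IsWeightedHomogeneous w (D f) (n + 1) := by
    intro n f h
    rw [hDf]
    refine IsWeightedHomogeneous.sum _ _ _ fun j _ => ?_
    rw [add_comm]
    refine IsWeightedHomogeneous.mul ?_ (h.pderiv (by simp [w]))
    convert! isWeightedHomogeneous_X F w (e (Sum.inl j))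
    simp [w]
  have h1D : ∀ n f, IsWeightedHomogeneous (1 : σ → ℕ) f n →
      IsWeightedHomogeneous (1 : σ → ℕ) (D f) (n + 0) := by
    intro n f h
    rw [hDf]
    refine IsWeightedHomogeneous.sum _ _ _ fun j _ => ?_
    obtain _ | n := n
    · have h' : f.IsHomogeneous 0 := h
      rw [← totalDegree_zero_iff_isHomogeneous, totalDegree_eq_zero_iff_eq_C] at h'
      rw [h', pderiv_C, mul_zero]
      exact isWeightedHomogeneous_zero _ _ _
    · rw [add_zero, add_comm]
      refine IsWeightedHomogeneous.mul ?_ (h.pderiv (by simp))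
      exact isWeightedHomogeneous_X F 1 (e (Sum.inl j))
  -- Capelli identity
  have key : ∀ (f : MvPolynomial σ F) (n a : ℕ), D f = 0 → IsWeightedHomogeneous w f a →
      f.IsHomogeneous n →
      ∑ i, ∑ j, (X (e (Sum.inl i)) * X (e (Sum.inr j)) - X (e (Sum.inr i)) * X (e (Sum.inl j))) *
        (pderiv (e (Sum.inl i)) (pderiv (e (Sum.inr j)) f)
          - pderiv (e (Sum.inl j)) (pderiv (e (Sum.inr i)) f)) =
      C (2 * ((a + 1) * ((n : F) - a))) * f := by
    intro f n a hf ha hn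
    have Ex : ∑ i, X (e (Sum.inl i)) * pderiv (e (Sum.inl i)) f = C (a : F) * f := by
      have h := ha.sum_weight_X_mul_pderiv
      rw [← Equiv.sum_comp e, Fintype.sum_sum_type] at h
      simpa [w] using h
    have Ey : ∑ i, X (e (Sum.inr i)) * pderiv (e (Sum.inr i)) f = C ((n : F) - a) * f := by
      have h := hn.sum_X_mul_pderiv
      rw [← Equiv.sum_comp e, Fintype.sum_sum_type, Ex] at h
      rw [C_sub, sub_mul, eq_sub_iff_add_eq, add_comm, h]
      simp
    have T1 : ∑ i, ∑ j, X (e (Sum.inl i)) * X (e (Sum.inr j)) *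
        pderiv (e (Sum.inl i)) (pderiv (e (Sum.inr j)) f) = C (a * ((n : F) - a)) * f := by
      have : ∀ i, ∑ j, X (e (Sum.inl i)) * X (e (Sum.inr j)) *
        pderiv (e (Sum.inl i)) (pderiv (e (Sum.inr j)) f) =
          C ((n : F) - a) * (X (e (Sum.inl i)) * pderiv (e (Sum.inl i)) f) := by
        intro i
        have h := congrArg (fun g => X (e (Sum.inl i)) * pderiv (e (Sum.inl i)) g) Ey
        simp only [pderiv_C_mul, map_sum, Finset.mul_sum] at h
        rw [mul_left_comm, ← h]
        refine Finset.sum_congr rfl fun j _ => ?_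
        rw [pderiv_mul, pderiv_X_of_ne (by simp)]
        ring
      simp_rw [this]
      rw [← Finset.mul_sum, Ex, C_mul]
      ring
    have T2 : ∑ i, ∑ j, X (e (Sum.inr i)) * X (e (Sum.inl j)) *
        pderiv (e (Sum.inl i)) (pderiv (e (Sum.inr j)) f) = - (C ((n : F) - a) * f) := by
      rw [← Ey, ← Finset.sum_neg_distrib]
      refine Finset.sum_congr rfl fun i _ => ?_
      rw [← mul_neg, ← hDx _ _ hf, hDf, Finset.mul_sum]
      refine Finset.sum_congr rfl fun j _ => ?_
      rw [pderiv_comm']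
      ring
    have T3 : ∑ i, ∑ j, X (e (Sum.inl i)) * X (e (Sum.inr j)) *
        pderiv (e (Sum.inl j)) (pderiv (e (Sum.inr i)) f) = - (C ((n : F) - a) * f) := by
      rw [Finset.sum_comm, ← T2]
      refine Finset.sum_congr rfl fun i _ => Finset.sum_congr rfl fun j _ => ?_
      ring
    have T4 : ∑ i, ∑ j, X (e (Sum.inr i)) * X (e (Sum.inl j)) *
        pderiv (e (Sum.inl j)) (pderiv (e (Sum.inr i)) f) = C (a * ((n : F) - a)) * f := by
      rw [Finset.sum_comm, ← T1]
      refine Finset.sum_congr rfl fun i _ => Finset.sum_congr rfl fun j _ => ?_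
      ring
    simp only [sub_mul, mul_sub, Finset.sum_sub_distrib]
    simp only [sub_mul, Finset.sum_sub_distrib, T1, T2, T3, T4]
    simp only [C_mul, C_add, C_sub, C_1, map_ofNat]
    ring
  have hhom : ∀ n f, f.IsHomogeneous n → D f = 0 → f ∈ A := by
    intro n
    induction n using Nat.strong_induction_on with
    | _ n ih =>
    intro f hn hf
    rcases Nat.eq_zero_or_pos n with rfl | hpos
    · rw [← totalDegree_zero_iff_isHomogeneous, totalDegree_eq_zero_iff_eq_C] at hn
      rw [hn]
      exact A.algebraMap_mem _
    rw [← finsum_weightedHomogeneousComponent w f]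
    refine finsum_induction (· ∈ A) A.zero_mem (fun _ _ => A.add_mem) fun a => ?_
    have ha := weightedHomogeneousComponent_isWeightedHomogeneous (w := w) a f
    have hg : D (weightedHomogeneousComponent w a f) = 0 := by
      rw [← comp_comm w 1 D hwD, hf, map_zero]
    have hgn : (weightedHomogeneousComponent w a f).IsHomogeneous n := by
      intro s hs
      rw [coeff_weightedHomogeneousComponent] at hs
      apply hn
      intro h
      simp [h] at hs
    generalize weightedHomogeneousComponent w a f = g at ha hg hgn
    by_cases hna : n = a
    · subst hna
      rw [g.as_sum]
      refine A.sum_mem fun s hs => ?_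
      rw [monomial_eq]
      refine A.mul_mem (A.algebraMap_mem _) (A.prod_mem fun t ht => ?_)
      obtain ⟨t, rfl⟩ := e.surjective t
      rcases t with t | t
      · exact A.pow_mem (hA t) _
      · exfalso
        have c1 := ha (mem_support_iff.mp hs)
        have c2 := hgn (mem_support_iff.mp hs)
        rw [Finsupp.weight_apply, Finsupp.sum_fintype _ _ (by simp), ← Equiv.sum_comp e,
          Fintype.sum_sum_type] at c1 c2
        simp [w] at c1 c2
        have : ∑ i, s (e (Sum.inr i)) = 0 := by omega
        rw [Finset.sum_eq_zero_iff] at this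
        exact Finsupp.mem_support_iff.mp ht (this t (Finset.mem_univ _))
    · have hk := key g n a hg ha hgn
      have hc : (2 * ((a + 1) * ((n : F) - a))) ≠ 0 := by
        refine mul_ne_zero two_ne_zero (mul_ne_zero (by exact_mod_cast Nat.succ_ne_zero a) ?_)
        exact sub_ne_zero.mpr (by exact_mod_cast hna)
      have hg' : g = C (2 * ((a + 1) * ((n : F) - a)))⁻¹ * (C (2 * ((a + 1) * ((n : F) - a))) * g) := by
        rw [← mul_assoc, ← C_mul, inv_mul_cancel₀ hc, C_1, one_mul]
      rw [hg', ← hk]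
      refine A.mul_mem (A.algebraMap_mem _) (A.sum_mem fun i _ => A.sum_mem fun j _ =>
        A.mul_mem (hB i j) (ih (n - 1 - 1) (by omega) _ ?_ (hOm i j g hg)))
      exact hgn.pderiv.pderiv.sub hgn.pderiv.pderiv
  rw [← sum_homogeneousComponent f]
  refine A.sum_mem fun n _ => hhom n _ (homogeneousComponent_isHomogeneous n f) ?_
  have := comp_comm 1 0 D h1D n f
  rw [hf, map_zero] at this
  exact this.symm

end Gen

def eqv (d : ℕ) : (Fin d ⊕ Fin d) ⊕ (Fin d ⊕ Fin d) ≃ (Fin d × Fin 2) ⊕ (Fin d × Fin 2) where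
  toFun s := match s with
    | Sum.inl (Sum.inl i) => Sum.inl (i, 0)
    | Sum.inl (Sum.inr i) => Sum.inr (i, 0)
    | Sum.inr (Sum.inl i) => Sum.inl (i, 1)
    | Sum.inr (Sum.inr i) => Sum.inr (i, 1)
  invFun s := match s with
    | Sum.inl (i, 0) => Sum.inl (Sum.inl i)
    | Sum.inr (i, 0) => Sum.inl (Sum.inr i)
    | Sum.inl (i, 1) => Sum.inr (Sum.inl i)
    | Sum.inr (i, 1) => Sum.inr (Sum.inr i)
  left_inv s := by rcases s with (s | s) | (s | s) <;> rfl
  right_inv s := by rcases s with ⟨s, t⟩ | ⟨s, t⟩ <;> fin_cases t <;> rfl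

/-- The algebra of constants `S^δ = ker δ_S` is generated, as a `K`-subalgebra of `S`, by
`u_1, u_3, …, u_{2d-1}`, `v_1, v_3, …, v_{2d-1}`, the `α_{pq}` and `β_{pq}` for
`1 ≤ p < q ≤ d`, and the `γ_{pq}` for `1 ≤ p, q ≤ d`. -/
theorem stmt1 [CharZero K] (hd : 1 ≤ d)
    (δS : Derivation K (S K d) (S K d))
    (hu0 : ∀ i : Fin d, δS (u K d (i, 0)) = 0)
    (hu1 : ∀ i : Fin d, δS (u K d (i, 1)) = u K d (i, 0))
    (hv0 : ∀ i : Fin d, δS (v K d (i, 0)) = 0)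
    (hv1 : ∀ i : Fin d, δS (v K d (i, 1)) = v K d (i, 0)) :
    ∀ f : S K d,
      δS f = 0 ↔ f ∈ Algebra.adjoin K
        ((Set.range fun i : Fin d => u K d (i, 0)) ∪
          (Set.range fun i : Fin d => v K d (i, 0)) ∪
          {p : S K d | ∃ i j : Fin d, i < j ∧ p = α K d i j} ∪
          {p : S K d | ∃ i j : Fin d, i < j ∧ p = β K d i j} ∪
          {p : S K d | ∃ i j : Fin d, p = γ K d i j}) := by
  intro f
  constructor
  · intro hf
    set T := ((Set.range fun i : Fin d => u K d (i, 0)) ∪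
          (Set.range fun i : Fin d => v K d (i, 0)) ∪
          {p : S K d | ∃ i j : Fin d, i < j ∧ p = α K d i j} ∪
          {p : S K d | ∃ i j : Fin d, i < j ∧ p = β K d i j} ∪
          {p : S K d | ∃ i j : Fin d, p = γ K d i j}) with hT
    have hα : ∀ i j, α K d i j ∈ Algebra.adjoin K T := by
      intro i j
      rcases lt_trichotomy i j with h | h | h
      · exact Algebra.subset_adjoin (Or.inl (Or.inl (Or.inr ⟨i, j, h, rfl⟩)))
      · have : α K d i j = 0 := by subst h; unfold α; ring
        rw [this]; exact Subalgebra.zero_mem _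
      · have : α K d i j = - α K d j i := by unfold α; ring
        rw [this]
        exact Subalgebra.neg_mem _
          (Algebra.subset_adjoin (Or.inl (Or.inl (Or.inr ⟨j, i, h, rfl⟩))))
    have hβ : ∀ i j, β K d i j ∈ Algebra.adjoin K T := by
      intro i j
      rcases lt_trichotomy i j with h | h | h
      · exact Algebra.subset_adjoin (Or.inl (Or.inr ⟨i, j, h, rfl⟩))
      · have : β K d i j = 0 := by subst h; unfold β; ring
        rw [this]; exact Subalgebra.zero_mem _
      · have : β K d i j = - β K d j i := by unfold β; ring
        rw [this]
        exact Subalgebra.neg_mem _ (Algebra.subset_adjoin (Or.inl (Or.inr ⟨j, i, h, rfl⟩)))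
    have hγ : ∀ i j, γ K d i j ∈ Algebra.adjoin K T := fun i j =>
      Algebra.subset_adjoin (Or.inr ⟨i, j, rfl⟩)
    refine gen (eqv d) δS ?_ ?_ _ ?_ ?_ f hf
    · rintro (i | i)
      · exact hu0 i
      · exact hv0 i
    · rintro (i | i)
      · exact hu1 i
      · exact hv1 i
    · rintro (i | i)
      · exact Algebra.subset_adjoin (Or.inl (Or.inl (Or.inl (Or.inl ⟨i, rfl⟩))))
      · exact Algebra.subset_adjoin (Or.inl (Or.inl (Or.inl (Or.inr ⟨i, rfl⟩))))
    · rintro (i | i) (j | j)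
      · exact hα i j
      · exact hγ i j
      · have h := Subalgebra.neg_mem _ (hγ j i)
        have e : - γ K d j i = v K d (i, 0) * u K d (j, 1) - v K d (i, 1) * u K d (j, 0) := by
          unfold γ; ring
        rw [e] at h
        exact h
      · exact hβ i j
  · intro hf
    induction hf using Algebra.adjoin_induction with
    | mem x hx =>
      rcases hx with (((⟨i, rfl⟩ | ⟨i, rfl⟩) | ⟨i, j, -, rfl⟩) | ⟨i, j, -, rfl⟩) | ⟨i, j, rfl⟩
      · exact hu0 i
      · exact hv0 i
      · simp only [α, map_sub, Derivation.leibniz, hu0, hu1, smul_eq_mul]; ring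
      · simp only [β, map_sub, Derivation.leibniz, hv0, hv1, smul_eq_mul]; ring
      · simp only [γ, map_sub, Derivation.leibniz, hu0, hu1, hv0, hv1, smul_eq_mul]; ring
    | algebraMap r => exact δS.map_algebraMap r
    | add x y _ _ hx hy => rw [map_add, hx, hy, add_zero]
    | mul x y _ _ hx hy => rw [Derivation.leibniz, hx, hy, smul_zero, smul_zero, add_zero]

end Stmt1
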